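/- arXiv:2210.11830 — 6 statements merged into one kernel-verified Lean document; each statement's English description precedes it below -/
import Mathlib

section
/- Let M = 2N with N ≥ 1, let γ ∈ ℝ, let r, s ≥ 0 with r² + s² = 1, let ε ∈ {−1, 1}, and let D be the M×M diagonal matrix with D_{j,j} = e^{iγ}·(r + ε·i·s·(−1)^j). Let E₁ and E₂ be M×M diagonal matrices with diagonal entries (E_i)_{l,l} = exp(i·φ_{i,l}) where the real phases satisfy φ_{i,l+N} = −φ_{i,l} for all l ∈ {0,…,N−1} and i ∈ {1,2}. Then for every k ∈ {0,…,N−1}, the reduced 2×2 matrix of V = E₂·(F·D·F†)·E₁ is W_k(V) = e^{iγ}·[[r·e^{i(φ_{1,k}+φ_{2,k})}, ε·i·s·e^{i(−φ_{1,k}+φ_{2,k})}],[ε·i·s·e^{i(φ_{1,k}−φ_{2,k})}, r·e^{−i(φ_{1,k}+φ_{2,k})}]]. -/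
/-!
The product `F * D * Fᴴ` is circulant: its `(a, b)` entry is
`e^{iγ} / (2N) * ∑ j, (r + ε i s (-1)^j) z^j` with `z = exp(2πi(a - b)/(2N))`
(`dftM_Dmat_entry`). A qubit block only involves `a = b`, where `z = 1`, and `a - b = ±N`, where
`z = -1`. Since `∑ j, (-1)^j = 0` over an even number of terms, only the constant part `r` survives
in the first case and only the alternating part `ε i s` in the second (`dftM_Dmat_diag`,
`dftM_Dmat_offdiag`). Multiplying by the diagonal matrices on the two sides adds the
phases, with the sign reversed on the modes `k + N`.
-/

open Matrix Complex

/-- The discrete Fourier transform matrix `F` with entries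
`F_{k,j} = exp(2πi·k·j/M)/√M`. -/
noncomputable def dftM (M : ℕ) : Matrix (Fin M) (Fin M) ℂ :=
  fun k j => Complex.exp (2 * (Real.pi : ℂ) * Complex.I * ((k : ℕ) : ℂ) * ((j : ℕ) : ℂ) / (M : ℂ))
    / ((Real.sqrt M : ℝ) : ℂ)

/-- The pulse-shaper diagonal matrix `D` with `D_{j,j} = e^{iγ}·(r + ε·i·s·(−1)^j)`. -/
noncomputable def Dmat (N : ℕ) (γ r s ε : ℝ) : Matrix (Fin (2*N)) (Fin (2*N)) ℂ :=
  Matrix.diagonal (fun j => Complex.exp (Complex.I * (γ : ℂ)) *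
    ((r : ℂ) + (ε : ℂ) * Complex.I * (s : ℂ) * (-1 : ℂ) ^ (j : ℕ)))

/-- The reduced 2×2 matrix `W_k(V)` on the qubit subspace spanned by modes `k` and `k+N`. -/
noncomputable def Wk {N : ℕ} (V : Matrix (Fin (2*N)) (Fin (2*N)) ℂ) (k : Fin N) :
    Matrix (Fin 2) (Fin 2) ℂ :=
  !![V ⟨(k : ℕ), by have h := k.isLt; omega⟩ ⟨(k : ℕ), by have h := k.isLt; omega⟩,
     V ⟨(k : ℕ), by have h := k.isLt; omega⟩ ⟨(k : ℕ) + N, by have h := k.isLt; omega⟩;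
     V ⟨(k : ℕ) + N, by have h := k.isLt; omega⟩ ⟨(k : ℕ), by have h := k.isLt; omega⟩,
     V ⟨(k : ℕ) + N, by have h := k.isLt; omega⟩ ⟨(k : ℕ) + N, by have h := k.isLt; omega⟩]

/-- Fidelity `F(W,T) = Tr(W†T)·Tr(T†W)/(Tr(W†W)·Tr(T†T))`. -/
noncomputable def fid (W T : Matrix (Fin 2) (Fin 2) ℂ) : ℂ :=
  (Wᴴ * T).trace * (Tᴴ * W).trace / ((Wᴴ * W).trace * (Tᴴ * T).trace)

/-- Success probability `P(W,T) = Tr(W†W)/Tr(T†T)`. -/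
noncomputable def sProb (W T : Matrix (Fin 2) (Fin 2) ℂ) : ℂ :=
  (Wᴴ * W).trace / (Tᴴ * T).trace

/-- `Z(φ) = [[e^{iφ},0],[0,e^{−iφ}]]`. -/
noncomputable def Zmat (φ : ℝ) : Matrix (Fin 2) (Fin 2) ℂ :=
  !![Complex.exp (Complex.I * (φ : ℂ)), 0; 0, Complex.exp (-(Complex.I * (φ : ℂ)))]

/-- `B(θ) = [[cos θ, i·sin θ],[i·sin θ, cos θ]]`. -/
noncomputable def Bmat (θ : ℝ) : Matrix (Fin 2) (Fin 2) ℂ :=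
  !![(Real.cos θ : ℂ), Complex.I * (Real.sin θ : ℂ);
     Complex.I * (Real.sin θ : ℂ), (Real.cos θ : ℂ)]

/-- The Hadamard matrix. -/
noncomputable def Hmat : Matrix (Fin 2) (Fin 2) ℂ :=
  ((1 / Real.sqrt 2 : ℝ) : ℂ) • !![1, 1; 1, -1]

theorem sum_neg_one_pow_two_mul (N : ℕ) : ∑ j : Fin (2 * N), (-1 : ℂ) ^ (j : ℕ) = 0 := by
  rw [Fin.sum_univ_eq_sum_range (fun j => (-1 : ℂ) ^ j) (2 * N), neg_one_geom_sum]
  simp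

/-- The entries of the circulant matrix `F * D * Fᴴ`, in terms of the ratio
`z = exp(2πi(a - b)/(2N))` between consecutive Fourier weights. -/
theorem dftM_Dmat_entry (N : ℕ) (γ r s ε : ℝ) (a b : Fin (2 * N)) (z : ℂ)
    (hz : Complex.exp (2 * (Real.pi : ℂ) * Complex.I * (((a : ℕ) : ℂ) - ((b : ℕ) : ℂ))
      / ((2 * N : ℕ) : ℂ)) = z) :
    (dftM (2 * N) * Dmat N γ r s ε * (dftM (2 * N))ᴴ) a b
      = Complex.exp (Complex.I * (γ : ℂ)) * (∑ j : Fin (2 * N),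
        ((r : ℂ) + (ε : ℂ) * Complex.I * (s : ℂ) * (-1 : ℂ) ^ (j : ℕ)) * z ^ (j : ℕ))
          / ((2 * N : ℕ) : ℂ) := by
  have hsq : (((Real.sqrt (2 * N : ℕ) : ℝ) : ℂ)) * ((Real.sqrt (2 * N : ℕ) : ℝ) : ℂ)
      = ((2 * N : ℕ) : ℂ) := by
    rw [← Complex.ofReal_mul, Real.mul_self_sqrt (Nat.cast_nonneg _), Complex.ofReal_natCast]
  rw [Matrix.mul_apply, Finset.mul_sum, Finset.sum_div]
  refine Finset.sum_congr rfl fun j _ => ?_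
  have hconj : star (dftM (2 * N) b j)
      = Complex.exp (-(2 * (Real.pi : ℂ) * Complex.I * ((b : ℕ) : ℂ) * ((j : ℕ) : ℂ)
        / ((2 * N : ℕ) : ℂ))) / ((Real.sqrt (2 * N : ℕ) : ℝ) : ℂ) := by
    rw [dftM, Complex.star_def, map_div₀, ← Complex.exp_conj, Complex.conj_ofReal]
    simp only [map_div₀, map_mul, Complex.conj_ofReal, Complex.conj_I, map_natCast, map_ofNat]
    congr 2
    ring
  have hexp : Complex.exp (2 * (Real.pi : ℂ) * Complex.I * ((a : ℕ) : ℂ) * ((j : ℕ) : ℂ)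
        / ((2 * N : ℕ) : ℂ))
      * Complex.exp (-(2 * (Real.pi : ℂ) * Complex.I * ((b : ℕ) : ℂ) * ((j : ℕ) : ℂ)
        / ((2 * N : ℕ) : ℂ))) = z ^ (j : ℕ) := by
    rw [← hz, ← Complex.exp_nat_mul, ← Complex.exp_add]
    congr 1
    ring
  rw [Dmat, Matrix.mul_diagonal, Matrix.conjTranspose_apply, hconj, ← hexp, dftM]
  have hfactor : ∀ p q e c u : ℂ, p / u * (e * c) * (q / u) = e * (c * (p * q)) / (u * u) := by
    intros
    ring
  rw [hfactor, hsq]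

theorem dftM_Dmat_diag (N : ℕ) (hN : 1 ≤ N) (γ r s ε : ℝ) (a : Fin (2 * N)) :
    (dftM (2 * N) * Dmat N γ r s ε * (dftM (2 * N))ᴴ) a a
      = Complex.exp (Complex.I * (γ : ℂ)) * r := by
  have hM : ((2 * N : ℕ) : ℂ) ≠ 0 := Nat.cast_ne_zero.mpr (by omega)
  rw [dftM_Dmat_entry N γ r s ε a a 1 (by simp)]
  simp only [one_pow, mul_one, Finset.sum_add_distrib, ← Finset.mul_sum,
    sum_neg_one_pow_two_mul, Finset.sum_const, Finset.card_univ, Fintype.card_fin, nsmul_eq_mul]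
  field_simp
  ring

theorem dftM_Dmat_offdiag (N : ℕ) (hN : 1 ≤ N) (γ r s ε : ℝ) (a b : Fin (2 * N))
    (hab : (a : ℕ) = b + N ∨ (b : ℕ) = a + N) :
    (dftM (2 * N) * Dmat N γ r s ε * (dftM (2 * N))ᴴ) a b
      = Complex.exp (Complex.I * (γ : ℂ)) * (ε * Complex.I * s) := by
  have hM : ((2 * N : ℕ) : ℂ) ≠ 0 := Nat.cast_ne_zero.mpr (by omega)
  have hN0 : (N : ℂ) ≠ 0 := Nat.cast_ne_zero.mpr (by omega)
  have hz : Complex.exp (2 * (Real.pi : ℂ) * Complex.I * (((a : ℕ) : ℂ) - ((b : ℕ) : ℂ))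
      / ((2 * N : ℕ) : ℂ)) = -1 := by
    rcases hab with h | h
    · rw [← Complex.exp_pi_mul_I, h]
      congr 1
      push_cast
      field_simp
      ring
    · rw [← inv_neg_one, ← Complex.exp_pi_mul_I, ← Complex.exp_neg, h]
      congr 1
      push_cast
      field_simp
      ring
  have hsum : ∑ j : Fin (2 * N),
      ((r : ℂ) + (ε : ℂ) * Complex.I * (s : ℂ) * (-1 : ℂ) ^ (j : ℕ)) * (-1) ^ (j : ℕ)
      = (2 * N : ℕ) * (ε * Complex.I * s) := by
    have h1 : ∀ j : Fin (2 * N),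
        ((r : ℂ) + (ε : ℂ) * Complex.I * (s : ℂ) * (-1 : ℂ) ^ (j : ℕ)) * (-1) ^ (j : ℕ)
        = r * (-1) ^ (j : ℕ) + ε * Complex.I * s := fun j => by
      rw [add_mul, mul_assoc _ ((-1 : ℂ) ^ (j : ℕ)), ← mul_pow]
      norm_num
    simp only [h1, Finset.sum_add_distrib, ← Finset.mul_sum, sum_neg_one_pow_two_mul,
      Finset.sum_const, Finset.card_univ, Fintype.card_fin, nsmul_eq_mul, mul_zero, zero_add]
    ring
  rw [dftM_Dmat_entry N γ r s ε a b (-1) hz, hsum, mul_left_comm,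
    mul_div_cancel_left₀ _ hM]

/-- explicit form of the reduced 2×2 matrix of `V = E₂·(F·D·F†)·E₁`
when the EOM phases satisfy `φ_{i,l+N} = −φ_{i,l}`. -/
theorem reduced_matrix_EPE (N : ℕ) (hN : 1 ≤ N) (γ r s ε : ℝ)
    (hr : 0 ≤ r) (hs : 0 ≤ s) (hrs : r ^ 2 + s ^ 2 = 1) (hε : ε = -1 ∨ ε = 1)
    (φ₁ φ₂ : ℕ → ℝ)
    (hφ₁ : ∀ l < N, φ₁ (l + N) = -φ₁ l) (hφ₂ : ∀ l < N, φ₂ (l + N) = -φ₂ l) :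
    ∀ k : Fin N,
      Wk (Matrix.diagonal (fun l : Fin (2*N) => Complex.exp (Complex.I * ((φ₂ (l : ℕ) : ℝ) : ℂ)))
          * (dftM (2*N) * Dmat N γ r s ε * (dftM (2*N))ᴴ)
          * Matrix.diagonal (fun l : Fin (2*N) => Complex.exp (Complex.I * ((φ₁ (l : ℕ) : ℝ) : ℂ)))) k
        = Complex.exp (Complex.I * (γ : ℂ)) •
          !![(r : ℂ) * Complex.exp (Complex.I * ((φ₁ (k : ℕ) + φ₂ (k : ℕ) : ℝ) : ℂ)),
             (ε : ℂ) * Complex.I * (s : ℂ)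
               * Complex.exp (Complex.I * ((-φ₁ (k : ℕ) + φ₂ (k : ℕ) : ℝ) : ℂ));
             (ε : ℂ) * Complex.I * (s : ℂ)
               * Complex.exp (Complex.I * ((φ₁ (k : ℕ) - φ₂ (k : ℕ) : ℝ) : ℂ)),
             (r : ℂ) * Complex.exp (-(Complex.I * ((φ₁ (k : ℕ) + φ₂ (k : ℕ) : ℝ) : ℂ)))] := by
  intro k
  have h1 := hφ₁ k k.isLt
  have h2 := hφ₂ k k.isLt
  ext i j
  fin_cases i <;> fin_cases j <;>
    simp only [Wk, Matrix.mul_diagonal, Matrix.diagonal_mul, Matrix.smul_apply, smul_eq_mul,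
      Fin.zero_eta, Fin.mk_one, Matrix.of_apply, Matrix.cons_val', Matrix.cons_val_zero,
      Matrix.cons_val_one, Matrix.cons_val_fin_one, h1, h2]
  · rw [dftM_Dmat_diag N hN, Complex.ofReal_add, mul_add, Complex.exp_add]
    ring
  · rw [dftM_Dmat_offdiag N hN _ _ _ _ _ _ (Or.inr rfl), Complex.ofReal_add, mul_add,
      Complex.exp_add]
    ring
  · rw [dftM_Dmat_offdiag N hN _ _ _ _ _ _ (Or.inl rfl), sub_eq_add_neg, Complex.ofReal_add,
      mul_add, Complex.exp_add]
    ring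
  · rw [dftM_Dmat_diag N hN, ← mul_neg, ← Complex.ofReal_neg, neg_add, Complex.ofReal_add,
      mul_add, Complex.exp_add]
    ring
end

section
/- Let δ, φ be real numbers and let W = e^{iδ}·Z(φ)·B(π/4)·Z(φ) = e^{iδ}·(1/√2)·[[e^{2iφ}, i],[i, e^{−2iφ}]]. Then the fidelity with respect to the Hadamard matrix satisfies F(W, H) = sin⁴(φ + π/4). (Fidelity of the Hadamard gate synthesized in the [EPE] configuration on a time-bin qubit when both electro-optic modulators apply the same phase φ and the pulse shaper is a balanced beamsplitter.) -/
/-!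
In `Tr(H†W)` the two diagonal entries of `W` enter with opposite signs and the two off-diagonal
entries `i` add up, so `Tr(H†W) = e^{iδ}·(e^{2iφ} - e^{-2iφ} + 2i)/2 = e^{iδ}·i·(1 + sin 2φ)`.
The other overlap `Tr(W†H)` is its complex conjugate, and since `W` and `H` are unitary the
denominator of the fidelity is `2·2`. Hence `F = ((1 + sin 2φ)/2)²`, which is `sin⁴(φ + π/4)` by
the half-angle identity `sin²(φ + π/4) = (1 + sin 2φ)/2`.
-/

open Matrix Complex

lemma inv_sqrt_two_mul_self :
    ((1 / Real.sqrt 2 : ℝ) : ℂ) * ((1 / Real.sqrt 2 : ℝ) : ℂ) = 1 / 2 := by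
  rw [← Complex.ofReal_mul, div_mul_div_comm, Real.mul_self_sqrt (by norm_num)]
  norm_num

lemma exp_mul_exp_neg_self (z : ℂ) : Complex.exp z * Complex.exp (-z) = 1 := by
  rw [← Complex.exp_add, add_neg_cancel, Complex.exp_zero]

lemma star_exp_I_mul (x : ℝ) :
    star (Complex.exp (Complex.I * (x : ℂ))) = Complex.exp (-(Complex.I * (x : ℂ))) := by
  rw [Complex.star_def, ← Complex.exp_conj]
  simp

lemma sin_add_pi_div_four_sq (φ : ℝ) :
    Real.sin (φ + Real.pi / 4) ^ 2 = (1 + Real.sin (2 * φ)) / 2 := by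
  rw [Real.sin_sq_eq_half_sub, show 2 * (φ + Real.pi / 4) = 2 * φ + Real.pi / 2 by ring,
    Real.cos_add_pi_div_two]
  ring

lemma EPE_matrix (φ : ℝ) :
    Zmat φ * Bmat (Real.pi / 4) * Zmat φ = ((1 / Real.sqrt 2 : ℝ) : ℂ) •
        !![Complex.exp (Complex.I * (2 * (φ : ℂ))), Complex.I;
           Complex.I, Complex.exp (-(Complex.I * (2 * (φ : ℂ))))] := by
  have hs : Real.sqrt 2 / 2 = 1 / Real.sqrt 2 := by
    rw [Real.sqrt_div_self, one_div]
  have h1 := exp_mul_exp_neg_self (Complex.I * (φ : ℂ))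
  have h2 : Complex.exp (Complex.I * (2 * (φ : ℂ))) =
      Complex.exp (Complex.I * (φ : ℂ)) * Complex.exp (Complex.I * (φ : ℂ)) := by
    rw [← Complex.exp_add]; ring_nf
  have h3 : Complex.exp (-(Complex.I * (2 * (φ : ℂ)))) =
      Complex.exp (-(Complex.I * (φ : ℂ))) * Complex.exp (-(Complex.I * (φ : ℂ))) := by
    rw [← Complex.exp_add]; ring_nf
  rw [Zmat, Bmat, Real.cos_pi_div_four, Real.sin_pi_div_four, hs, h2, h3]
  generalize ((1 / Real.sqrt 2 : ℝ) : ℂ) = c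
  ext i j
  fin_cases i <;> fin_cases j <;> simp [Matrix.mul_apply, Fin.sum_univ_two]
  · ring
  · linear_combination c * Complex.I * h1
  · linear_combination c * Complex.I * h1
  · ring

lemma trace_Hmat_conjTranspose_mul_self : (Hmatᴴ * Hmat).trace = 2 := by
  have hc := inv_sqrt_two_mul_self
  have hcs : star ((1 / Real.sqrt 2 : ℝ) : ℂ) = ((1 / Real.sqrt 2 : ℝ) : ℂ) :=
    Complex.conj_ofReal _
  rw [Hmat]
  generalize ((1 / Real.sqrt 2 : ℝ) : ℂ) = c at hc hcs ⊢
  simp only [Matrix.trace_fin_two, Matrix.mul_apply, Fin.sum_univ_two, Matrix.conjTranspose_apply,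
    Matrix.smul_apply, smul_eq_mul, star_mul', hcs, Matrix.of_apply, Matrix.cons_val', Matrix.cons_val_zero,
    Matrix.cons_val_one, star_one, star_neg]
  linear_combination 4 * hc

/-- Hadamard fidelity in the [EPE] configuration is
`sin⁴(φ + π/4)`. -/
theorem hadamard_fidelity_EPE (δ φ : ℝ) (W : Matrix (Fin 2) (Fin 2) ℂ)
    (hW : W = Complex.exp (Complex.I * (δ : ℂ)) • (Zmat φ * Bmat (Real.pi / 4) * Zmat φ)) :
    W = Complex.exp (Complex.I * (δ : ℂ)) • (((1 / Real.sqrt 2 : ℝ) : ℂ) •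
        !![Complex.exp (Complex.I * (2 * (φ : ℂ))), Complex.I;
           Complex.I, Complex.exp (-(Complex.I * (2 * (φ : ℂ))))]) ∧
    fid W Hmat = ((Real.sin (φ + Real.pi / 4) ^ 4 : ℝ) : ℂ) := by
  rw [EPE_matrix] at hW
  refine ⟨hW, ?_⟩
  have hc := inv_sqrt_two_mul_self
  have hcs : star ((1 / Real.sqrt 2 : ℝ) : ℂ) = ((1 / Real.sqrt 2 : ℝ) : ℂ) :=
    Complex.conj_ofReal _
  have hd := exp_mul_exp_neg_self (Complex.I * (δ : ℂ))
  have hds := star_exp_I_mul δ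
  have he := exp_mul_exp_neg_self (Complex.I * (2 * (φ : ℂ)))
  have hes : star (Complex.exp (Complex.I * (2 * (φ : ℂ)))) =
      Complex.exp (-(Complex.I * (2 * (φ : ℂ)))) := by
    simpa using star_exp_I_mul (2 * φ)
  have hes' : star (Complex.exp (-(Complex.I * (2 * (φ : ℂ))))) =
      Complex.exp (Complex.I * (2 * (φ : ℂ))) := by
    rw [← hes, star_star]
  have hsin : Complex.exp (Complex.I * (2 * (φ : ℂ))) - Complex.exp (-(Complex.I * (2 * (φ : ℂ))))
      = 2 * Complex.I * (Real.sin (2 * φ) : ℂ) := by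
    rw [mul_comm Complex.I, ← neg_mul, Complex.ofReal_sin, Complex.sin]
    push_cast
    linear_combination (Complex.exp (2 * (φ : ℂ) * Complex.I) -
      Complex.exp (-(2 * (φ : ℂ)) * Complex.I)) * Complex.I_sq
  have hI : star Complex.I = -Complex.I := Complex.conj_I
  have hHW : (Hmatᴴ * W).trace =
      Complex.exp (Complex.I * (δ : ℂ)) * Complex.I * (1 + (Real.sin (2 * φ) : ℂ)) := by
    rw [hW, Hmat]
    generalize ((1 / Real.sqrt 2 : ℝ) : ℂ) = c at hc hcs ⊢
    generalize Complex.exp (Complex.I * (δ : ℂ)) = d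
    simp only [Matrix.trace_fin_two, Matrix.mul_apply, Fin.sum_univ_two,
      Matrix.conjTranspose_apply, Matrix.smul_apply, smul_eq_mul, star_mul', hcs,
      Matrix.of_apply, Matrix.cons_val', Matrix.cons_val_zero, Matrix.cons_val_one,
      star_one, star_neg]
    linear_combination d * (Complex.exp (Complex.I * (2 * (φ : ℂ))) -
      Complex.exp (-(Complex.I * (2 * (φ : ℂ)))) + 2 * Complex.I) * hc + d / 2 * hsin
  have hWH : (Wᴴ * Hmat).trace =
      Complex.exp (-(Complex.I * (δ : ℂ))) * -Complex.I * (1 + (Real.sin (2 * φ) : ℂ)) := by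
    have hr : star (Real.sin (2 * φ) : ℂ) = (Real.sin (2 * φ) : ℂ) := Complex.conj_ofReal _
    have h : (Wᴴ * Hmat).trace = star (Hmatᴴ * W).trace := by
      rw [← Matrix.trace_conjTranspose, Matrix.conjTranspose_mul,
        Matrix.conjTranspose_conjTranspose]
    rw [h, hHW]
    simp only [star_mul', star_add, star_one, hI, hds, hr]
  have hWW : (Wᴴ * W).trace = 2 := by
    rw [hW]
    generalize ((1 / Real.sqrt 2 : ℝ) : ℂ) = c at hc hcs ⊢
    simp only [Matrix.trace_fin_two, Matrix.mul_apply, Fin.sum_univ_two,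
      Matrix.conjTranspose_apply, Matrix.smul_apply, smul_eq_mul, star_mul', hcs,
      Matrix.of_apply, Matrix.cons_val', Matrix.cons_val_zero, Matrix.cons_val_one,
      hds, hes, hes', hI]
    generalize Complex.exp (Complex.I * (δ : ℂ)) = d at hd ⊢
    generalize Complex.exp (-(Complex.I * (δ : ℂ))) = d' at hd ⊢
    generalize Complex.exp (Complex.I * (2 * (φ : ℂ))) = e at he ⊢
    generalize Complex.exp (-(Complex.I * (2 * (φ : ℂ)))) = e' at he ⊢
    linear_combination 2 * d * d' * c * c * he - 2 * d * d' * c * c * Complex.I_sq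
      + 4 * c * c * hd + 4 * hc
  have hfin : Real.sin (φ + Real.pi / 4) ^ 4 = ((1 + Real.sin (2 * φ)) / 2) ^ 2 := by
    rw [← sin_add_pi_div_four_sq]; ring
  rw [fid, hWH, hHW, hWW, trace_Hmat_conjTranspose_mul_self, hfin]
  generalize Real.sin (2 * φ) = s
  push_cast
  -- The global phases cancel and `-I * I = 1`.
  linear_combination -(Complex.I ^ 2 * (1 + (s : ℂ)) ^ 2 / 4) * hd
    - (1 + (s : ℂ)) ^ 2 / 4 * Complex.I_sq
end

section
/- Let δ, φ be real numbers and let W = e^{iδ}·B(π/4)·Z(φ)·B(π/4) = e^{iδ}·[[i·sin φ, i·cos φ],[i·cos φ, −i·sin φ]]. Then the fidelity with respect to the Hadamard matrix satisfies F(W, H) = sin²(φ + π/4). (Fidelity of the Hadamard gate synthesized in the [PEP] configuration on a time-bin qubit when both pulse shapers are balanced beamsplitters and the electro-optic modulator applies phase φ.) -/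
/-! Fidelity is unchanged when either argument is multiplied by a nonzero scalar, so the global
phase `e^{iδ}` and the factor `1/√2` of the Hadamard matrix drop out. What remains are the
matrices `i·[[sin φ, cos φ],[cos φ, −sin φ]]` and `[[1,1],[1,−1]]`, with fidelity
`(2 sin φ + 2 cos φ)² / (2·4) = (sin φ + cos φ)²/2 = sin²(φ + π/4)`. -/

open Matrix Complex

/-- Fidelity does not depend on nonzero scalar factors of its arguments. -/
lemma fid_smul_smul (a b : ℂ) (ha : a ≠ 0) (hb : b ≠ 0) (W T : Matrix (Fin 2) (Fin 2) ℂ) :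
    fid (a • W) (b • T) = fid W T := by
  have ha' : star a ≠ 0 := star_ne_zero.mpr ha
  have hb' : star b ≠ 0 := star_ne_zero.mpr hb
  simp only [fid, conjTranspose_smul, Matrix.smul_mul, Matrix.mul_smul, trace_smul, smul_eq_mul]
  rw [← mul_div_mul_left ((Wᴴ * T).trace * (Tᴴ * W).trace)
    ((Wᴴ * W).trace * (Tᴴ * T).trace)
    (mul_ne_zero (mul_ne_zero ha ha') (mul_ne_zero hb hb'))]
  congr 1 <;> ring

/-- A phase modulator between two balanced beamsplitters. -/
lemma Bmat_Zmat_Bmat (φ : ℝ) : Bmat (Real.pi / 4) * Zmat φ * Bmat (Real.pi / 4) =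
    !![Complex.I * (Real.sin φ : ℂ), Complex.I * (Real.cos φ : ℂ);
       Complex.I * (Real.cos φ : ℂ), -(Complex.I * (Real.sin φ : ℂ))] := by
  have h2 : ((Real.sqrt 2 : ℝ) : ℂ) ^ 2 = 2 := by
    norm_cast
    exact Real.sq_sqrt (by norm_num)
  have e1 : Complex.exp (Complex.I * (φ : ℂ)) = Real.cos φ + Real.sin φ * Complex.I := by
    rw [mul_comm, Complex.exp_mul_I]; push_cast; rfl
  have e2 : Complex.exp (-(Complex.I * (φ : ℂ))) = Real.cos φ - Real.sin φ * Complex.I := by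
    rw [mul_comm, ← neg_mul, Complex.exp_mul_I, Complex.cos_neg, Complex.sin_neg]
    push_cast; ring
  have hI := Complex.I_sq
  rw [Bmat, Zmat, e1, e2, Real.cos_pi_div_four, Real.sin_pi_div_four]
  generalize Real.cos φ = c
  generalize Real.sin φ = s
  ext i j
  fin_cases i <;> fin_cases j <;> simp [Matrix.mul_apply, Fin.sum_univ_two] <;> grind

/-- Hadamard fidelity in the [PEP] configuration is
`sin²(φ + π/4)`. -/
theorem hadamard_fidelity_PEP (δ φ : ℝ) (W : Matrix (Fin 2) (Fin 2) ℂ)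
    (hW : W = Complex.exp (Complex.I * (δ : ℂ)) • (Bmat (Real.pi / 4) * Zmat φ * Bmat (Real.pi / 4))) :
    W = Complex.exp (Complex.I * (δ : ℂ)) •
        !![Complex.I * (Real.sin φ : ℂ), Complex.I * (Real.cos φ : ℂ);
           Complex.I * (Real.cos φ : ℂ), -(Complex.I * (Real.sin φ : ℂ))] ∧
    fid W Hmat = ((Real.sin (φ + Real.pi / 4) ^ 2 : ℝ) : ℂ) := by
  rw [Bmat_Zmat_Bmat] at hW
  refine ⟨hW, ?_⟩
  have h2 : ((1 / Real.sqrt 2 : ℝ) : ℂ) ≠ 0 := by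
    norm_cast
    positivity
  rw [hW, Hmat, fid_smul_smul _ _ (Complex.exp_ne_zero _) h2]
  have hs : Real.sin (φ + Real.pi / 4) ^ 2 = (Real.sin φ + Real.cos φ) ^ 2 / 2 := by
    rw [Real.sin_add, Real.cos_pi_div_four, Real.sin_pi_div_four]
    linear_combination (Real.sin φ + Real.cos φ) ^ 2 / 4 * Real.sq_sqrt (show (0 : ℝ) ≤ 2 by norm_num)
  have hp : (Real.sin φ : ℂ) ^ 2 + (Real.cos φ : ℂ) ^ 2 = 1 := by
    exact_mod_cast Real.sin_sq_add_cos_sq φ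
  have hI := Complex.I_sq
  rw [hs]
  push_cast [-Complex.ofReal_sin, -Complex.ofReal_cos]
  generalize Real.cos φ = c at hp ⊢
  generalize Real.sin φ = s at hp ⊢
  simp only [fid, trace_fin_two, Matrix.mul_apply, Fin.sum_univ_two, conjTranspose_apply]
  simp
  -- The normalisation `Tr(W†W) Tr(T†T)` equals `2 · 4`, because `sin² + cos² = 1`.
  rw [div_eq_iff (by grind)]
  grind
end

section
/- Let a, b, c, d, δ be real numbers and r, s nonnegative reals with (r, s) ≠ (0, 0). Let T = M(a,b,c,d) and let W = e^{iδ}·[[r·e^{−i(b+d)/2}, −s·e^{−i(b−d)/2}],[s·e^{i(b−d)/2}, r·e^{i(b+d)/2}]]. Then the success probability satisfies P(W, T) = r² + s² and the fidelity satisfies F(W, T) = (r·cos(c/2) + s·sin(c/2))²/(r² + s²). (Performance of arbitrary single-qubit gate synthesis in the [PEP] configuration with frequency-bin encoding, where r and s are the Bessel amplitudes J₀(μ) and J₁(μ) of the single-tone electro-optic modulation.) -/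
/-! Both `W` and the gate `T` are instances of one family `phaseMat α x y p q`, with the same
phases `p`, `q`: a global phase `e^{iα}` times a matrix of real amplitudes `x`, `y` dressed by
`e^{±ip}`, `e^{±iq}`. In the trace inner product the dressing phases cancel, so
`Tr(A† B) = 2 e^{i(β-α)} (x u + y v)` (`trace_phaseMat`). Taking `(x, y) = (r, s)` and
`(u, v) = (cos (c/2), sin (c/2))`, the global phases also cancel in `P` and in the product
`Tr(W†T) Tr(T†W)`, and both formulas follow from `cos² + sin² = 1`. -/

open Matrix Complex

/-- The arbitrary 2×2 unitary `M(a,b,c,d)`. -/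
noncomputable def Mgate (a b c d : ℝ) : Matrix (Fin 2) (Fin 2) ℂ :=
  Complex.exp (Complex.I * (a : ℂ)) •
    !![(Real.cos (c / 2) : ℂ) * Complex.exp (-(Complex.I * (((b + d) / 2 : ℝ) : ℂ))),
       -((Real.sin (c / 2) : ℂ) * Complex.exp (-(Complex.I * (((b - d) / 2 : ℝ) : ℂ))));
       (Real.sin (c / 2) : ℂ) * Complex.exp (Complex.I * (((b - d) / 2 : ℝ) : ℂ)),
       (Real.cos (c / 2) : ℂ) * Complex.exp (Complex.I * (((b + d) / 2 : ℝ) : ℂ))]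

/-- The matrix `e^{iα}·[[x·e^{−ip}, −y·e^{−iq}],[y·e^{iq}, x·e^{ip}]]`: a real linear family in
the amplitudes `(x, y)`, up to the global phase `α`. -/
noncomputable def phaseMat (α x y p q : ℝ) : Matrix (Fin 2) (Fin 2) ℂ :=
  Complex.exp (Complex.I * (α : ℂ)) •
    !![(x : ℂ) * Complex.exp (-(Complex.I * (p : ℂ))),
       -((y : ℂ) * Complex.exp (-(Complex.I * (q : ℂ))));
       (y : ℂ) * Complex.exp (Complex.I * (q : ℂ)),
       (x : ℂ) * Complex.exp (Complex.I * (p : ℂ))]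

/-- The dressing phases `p`, `q` drop out of the trace inner product. -/
lemma trace_phaseMat (α β x y u v p q : ℝ) :
    ((phaseMat α x y p q)ᴴ * phaseMat β u v p q).trace =
      2 * (Complex.exp (-(Complex.I * (α : ℂ))) * Complex.exp (Complex.I * (β : ℂ))) *
        ((x : ℂ) * u + (y : ℂ) * v) := by
  have hp : Complex.exp (-(Complex.I * (p : ℂ))) * Complex.exp (Complex.I * (p : ℂ)) = 1 := by
    rw [← Complex.exp_add, neg_add_cancel, Complex.exp_zero]
  have hq : Complex.exp (-(Complex.I * (q : ℂ))) * Complex.exp (Complex.I * (q : ℂ)) = 1 := by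
    rw [← Complex.exp_add, neg_add_cancel, Complex.exp_zero]
  simp only [phaseMat, Matrix.trace_fin_two, Matrix.mul_apply, Fin.sum_univ_two,
    Matrix.conjTranspose_apply, Matrix.smul_apply, smul_eq_mul, Matrix.of_apply,
    Matrix.cons_val', Matrix.cons_val_zero, Matrix.cons_val_one, Matrix.cons_val_fin_one,
    star_mul', Complex.star_def, ← Complex.exp_conj, map_neg, map_mul,
    Complex.conj_I, Complex.conj_ofReal, neg_mul, neg_neg]
  generalize Complex.exp (-(Complex.I * (p : ℂ))) = P' at *
  generalize Complex.exp (Complex.I * (p : ℂ)) = P at *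
  generalize Complex.exp (-(Complex.I * (q : ℂ))) = Q' at *
  generalize Complex.exp (Complex.I * (q : ℂ)) = Q at *
  generalize Complex.exp (-(Complex.I * (α : ℂ))) = A at *
  generalize Complex.exp (Complex.I * (β : ℂ)) = B at *
  linear_combination 2 * A * B * x * u * hp + 2 * A * B * y * v * hq

/-- performance of gate synthesis in the [PEP] configuration with
frequency-bin encoding: `P(W,T) = r² + s²` and
`F(W,T) = (r·cos(c/2) + s·sin(c/2))²/(r² + s²)`. -/
theorem PEP_frequency_performance (a b c d δ : ℝ) (r s : ℝ)
    (hr : 0 ≤ r) (hs : 0 ≤ s) (hne : (r, s) ≠ (0, 0))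
    (W : Matrix (Fin 2) (Fin 2) ℂ)
    (hW : W = Complex.exp (Complex.I * (δ : ℂ)) •
      !![(r : ℂ) * Complex.exp (-(Complex.I * (((b + d) / 2 : ℝ) : ℂ))),
         -((s : ℂ) * Complex.exp (-(Complex.I * (((b - d) / 2 : ℝ) : ℂ))));
         (s : ℂ) * Complex.exp (Complex.I * (((b - d) / 2 : ℝ) : ℂ)),
         (r : ℂ) * Complex.exp (Complex.I * (((b + d) / 2 : ℝ) : ℂ))]) :
    sProb W (Mgate a b c d) = ((r ^ 2 + s ^ 2 : ℝ) : ℂ) ∧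
    fid W (Mgate a b c d) =
      (((r * Real.cos (c / 2) + s * Real.sin (c / 2)) ^ 2 / (r ^ 2 + s ^ 2) : ℝ) : ℂ) := by
  have hexp (t : ℝ) :
      Complex.exp (-(Complex.I * (t : ℂ))) * Complex.exp (Complex.I * (t : ℂ)) = 1 := by
    rw [← Complex.exp_add, neg_add_cancel, Complex.exp_zero]
  have hW' : W = phaseMat δ r s ((b + d) / 2) ((b - d) / 2) := hW
  have hT' : Mgate a b c d =
      phaseMat a (Real.cos (c / 2)) (Real.sin (c / 2)) ((b + d) / 2) ((b - d) / 2) := rfl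
  have hpos : r ^ 2 + s ^ 2 ≠ 0 := by
    intro h
    apply hne
    have h1 : r = 0 := by nlinarith [sq_nonneg r, sq_nonneg s]
    have h2 : s = 0 := by nlinarith [sq_nonneg r, sq_nonneg s]
    rw [h1, h2]
  have hposC : (r : ℂ) ^ 2 + (s : ℂ) ^ 2 ≠ 0 := by exact_mod_cast hpos
  have hcs : ((Real.cos (c / 2) : ℝ) : ℂ) * (Real.cos (c / 2) : ℝ) +
      ((Real.sin (c / 2) : ℝ) : ℂ) * (Real.sin (c / 2) : ℝ) = 1 := by
    exact_mod_cast (by nlinarith [Real.cos_sq_add_sin_sq (c / 2)] :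
      Real.cos (c / 2) * Real.cos (c / 2) + Real.sin (c / 2) * Real.sin (c / 2) = 1)
  have hWW : (Wᴴ * W).trace = 2 * ((r : ℂ) ^ 2 + (s : ℂ) ^ 2) := by
    rw [hW', trace_phaseMat, hexp]
    ring
  have hTT : ((Mgate a b c d)ᴴ * Mgate a b c d).trace = 2 := by
    rw [hT', trace_phaseMat, hexp, hcs]
    ring
  have hWT : (Wᴴ * Mgate a b c d).trace * ((Mgate a b c d)ᴴ * W).trace =
      4 * ((r : ℂ) * (Real.cos (c / 2) : ℝ) + (s : ℂ) * (Real.sin (c / 2) : ℝ)) ^ 2 := by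
    rw [hW', hT', trace_phaseMat, trace_phaseMat]
    -- The relative phases `e^{i(a-δ)}` and `e^{i(δ-a)}` cancel.
    linear_combination
      4 * ((r : ℂ) * (Real.cos (c / 2) : ℝ) + (s : ℂ) * (Real.sin (c / 2) : ℝ)) ^ 2 *
        (Complex.exp (-(Complex.I * (δ : ℂ))) * Complex.exp (Complex.I * (δ : ℂ)) * hexp a +
          hexp δ)
  constructor
  · rw [sProb, hWW, hTT]
    push_cast
    ring
  · rw [fid, hWT, hWW, hTT]
    simp only [Complex.ofReal_div, Complex.ofReal_add, Complex.ofReal_mul, Complex.ofReal_pow]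
    field_simp
    ring
end

section
/- Let M = 2N with N ≥ 1, let γ ∈ ℝ, let ε ∈ {−1, 1}, and let D be the M×M diagonal matrix with D_{j,j} = ε·i·e^{iγ}·(−1)^j (the two-scattering pulse-shaper phases with r = 0, s = 1). Then for every k ∈ {0,…,N−1}, the reduced 2×2 matrix satisfies W_k(F·D·F†) = ε·i·e^{iγ}·X where X = [[0,1],[1,0]]; consequently F(W_k(F·D·F†), X) = 1 and P(W_k(F·D·F†), X) = 1 for every k. (A single pulse shaper implements the bit-flip gate X exactly, up to global phase, on all N time-bin qubits in parallel, with unit fidelity and unit success probability.) -/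
/-! Since `D = c · diag((-1)^j)` with `c = ε·i·e^{iγ}`, the `(a, b)` entry of `F D F†` is
`c/(2N) · ∑_{j < 2N} (-q)^j` with `q = exp(2πi(a-b)/(2N))` (`entry_eq`). On the diagonal `q = 1` and
the alternating sum of even length vanishes; for `a - b = ±N` we have `q = -1` and the sum is `2N`.
Hence `W_k = c · X`, and fidelity and success probability are `1` because `|c| = 1`. -/

open Matrix Complex

/-- An entry of `F D F†` as a geometric sum; `q` is the ratio of the two Fourier characters
`j ↦ exp(2πi·a·j/(2N))` and `j ↦ exp(2πi·b·j/(2N))` at `j = 1`. -/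
theorem entry_eq (N : ℕ) (γ ε : ℝ) (a b : Fin (2*N)) (q : ℂ)
    (hq : Complex.exp (2 * (Real.pi : ℂ) * Complex.I * (((a : ℕ) : ℂ) - ((b : ℕ) : ℂ))
      / ((2 * N : ℕ) : ℂ)) = q) :
    (dftM (2*N) * Dmat N γ 0 1 ε * (dftM (2*N))ᴴ) a b
      = ((ε : ℂ) * Complex.I * Complex.exp (Complex.I * (γ : ℂ))) *
        ((∑ j ∈ Finset.range (2*N), (-q) ^ j) / ((2 * N : ℕ) : ℂ)) := by
  have hs : ((Real.sqrt (2 * N : ℕ) : ℝ) : ℂ) * ((Real.sqrt (2 * N : ℕ) : ℝ) : ℂ)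
      = ((2 * N : ℕ) : ℂ) := by
    rw [← Complex.ofReal_mul, Real.mul_self_sqrt (Nat.cast_nonneg _), Complex.ofReal_natCast]
  rw [Matrix.mul_apply, ← Fin.sum_univ_eq_sum_range (fun j => (-q) ^ j), Finset.sum_div,
    Finset.mul_sum]
  refine Finset.sum_congr rfl fun j _ => ?_
  have hconj : star (Complex.exp (2 * (Real.pi : ℂ) * Complex.I * ((b : ℕ) : ℂ) * ((j : ℕ) : ℂ)
      / ((2 * N : ℕ) : ℂ))) = Complex.exp (-(2 * (Real.pi : ℂ) * Complex.I * ((b : ℕ) : ℂ) *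
        ((j : ℕ) : ℂ) / ((2 * N : ℕ) : ℂ))) := by
    rw [Complex.star_def, ← Complex.exp_conj]
    congr 1
    simp only [map_div₀, map_mul, Complex.conj_I, Complex.conj_ofReal, map_natCast, map_ofNat]
    ring
  have hpow : (-q) ^ (j : ℕ) = (-1) ^ (j : ℕ) *
      (Complex.exp (2 * (Real.pi : ℂ) * Complex.I * ((a : ℕ) : ℂ) * ((j : ℕ) : ℂ)
        / ((2 * N : ℕ) : ℂ)) * Complex.exp (-(2 * (Real.pi : ℂ) * Complex.I * ((b : ℕ) : ℂ) *
        ((j : ℕ) : ℂ) / ((2 * N : ℕ) : ℂ)))) := by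
    rw [neg_pow, ← hq, ← Complex.exp_nat_mul, ← Complex.exp_add]
    congr 2
    ring
  rw [Dmat, Matrix.mul_diagonal, Matrix.conjTranspose_apply, hpow]
  simp only [dftM]
  rw [star_div₀, hconj, Complex.star_def, Complex.conj_ofReal, ← hs]
  simp only [Complex.ofReal_zero, Complex.ofReal_one, div_eq_mul_inv, mul_inv]
  ring

theorem entry_diag (N : ℕ) (γ ε : ℝ) (a : Fin (2*N)) :
    (dftM (2*N) * Dmat N γ 0 1 ε * (dftM (2*N))ᴴ) a a = 0 := by
  rw [entry_eq N γ ε a a 1 (by simp), neg_one_geom_sum]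
  simp

theorem entry_flip (N : ℕ) (hN : 1 ≤ N) (γ ε : ℝ) (a b : Fin (2*N))
    (h : (a : ℕ) = b + N ∨ (b : ℕ) = a + N) :
    (dftM (2*N) * Dmat N γ 0 1 ε * (dftM (2*N))ᴴ) a b
      = (ε : ℂ) * Complex.I * Complex.exp (Complex.I * (γ : ℂ)) := by
  have hN0 : (N : ℂ) ≠ 0 := by exact_mod_cast (by omega : N ≠ 0)
  rw [entry_eq N γ ε a b (-1)]
  · simp [hN0]
  · rcases h with h | h
    · rw [← Complex.exp_pi_mul_I, h]
      congr 1
      push_cast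
      field_simp
      ring
    · have : Complex.exp (-(Real.pi * Complex.I)) = -1 := by
        rw [Complex.exp_neg, Complex.exp_pi_mul_I]; norm_num
      rw [← this, h]
      congr 1
      push_cast
      field_simp
      ring

/-- a single pulse shaper (phases `D_{j,j} = ε·i·e^{iγ}·(−1)^j`,
i.e. `r = 0`, `s = 1`) implements the bit-flip gate `X` exactly, up to global
phase, on all `N` time-bin qubits in parallel, with unit fidelity and unit
success probability. -/
theorem bit_flip_all_qubits (N : ℕ) (hN : 1 ≤ N) (γ ε : ℝ) (hε : ε = -1 ∨ ε = 1) :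
    ∀ k : Fin N,
      Wk (dftM (2*N) * Dmat N γ 0 1 ε * (dftM (2*N))ᴴ) k
        = ((ε : ℂ) * Complex.I * Complex.exp (Complex.I * (γ : ℂ))) •
            (!![0, 1; 1, 0] : Matrix (Fin 2) (Fin 2) ℂ) ∧
      fid (Wk (dftM (2*N) * Dmat N γ 0 1 ε * (dftM (2*N))ᴴ) k) !![0, 1; 1, 0] = 1 ∧
      sProb (Wk (dftM (2*N) * Dmat N γ 0 1 ε * (dftM (2*N))ᴴ) k) !![0, 1; 1, 0] = 1 := by
  intro k
  have hW : Wk (dftM (2*N) * Dmat N γ 0 1 ε * (dftM (2*N))ᴴ) k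
        = ((ε : ℂ) * Complex.I * Complex.exp (Complex.I * (γ : ℂ))) •
            (!![0, 1; 1, 0] : Matrix (Fin 2) (Fin 2) ℂ) := by
    rw [Wk, entry_diag N, entry_diag N, entry_flip N hN _ _ _ _ (Or.inr rfl),
      entry_flip N hN _ _ _ _ (Or.inl rfl)]
    simp
  have hc : star ((ε : ℂ) * Complex.I * Complex.exp (Complex.I * (γ : ℂ))) *
      ((ε : ℂ) * Complex.I * Complex.exp (Complex.I * (γ : ℂ))) = 1 := by
    rw [Complex.star_def, ← Complex.normSq_eq_conj_mul_self, Complex.normSq_eq_norm_sq]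
    rcases hε with rfl | rfl <;> simp [mul_comm Complex.I, Complex.norm_exp_ofReal_mul_I]
  have hX : ((!![0, 1; 1, 0] : Matrix (Fin 2) (Fin 2) ℂ)ᴴ * !![0, 1; 1, 0]).trace = 2 := by
    simp [Matrix.trace_fin_two, Matrix.mul_apply, Fin.sum_univ_two]
    norm_num
  refine ⟨hW, ?_, ?_⟩
  · rw [hW]
    generalize (ε : ℂ) * Complex.I * Complex.exp (Complex.I * (γ : ℂ)) = c at hc
    simp only [fid, Matrix.conjTranspose_smul, Matrix.smul_mul, Matrix.mul_smul,
      Matrix.trace_smul, hX, smul_eq_mul]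
    have h1 : star c * 2 * (c * 2) = 4 := by linear_combination 4 * hc
    have h3 : c * (star c * 2) * 2 = 4 := by linear_combination 4 * hc
    rw [h1, h3]; norm_num
  · rw [hW]
    generalize (ε : ℂ) * Complex.I * Complex.exp (Complex.I * (γ : ℂ)) = c at hc
    simp only [sProb, Matrix.conjTranspose_smul, Matrix.smul_mul, Matrix.mul_smul,
      Matrix.trace_smul, hX, smul_eq_mul]
    linear_combination hc
end

section
/- For all real numbers δ, θ, φ, the Hadamard matrix H is not equal to e^{iδ}·B(θ)·Z(φ) and is not equal to e^{iδ}·Z(φ)·B(θ). (Hence two components — one pulse shaper and one electro-optic modulator in either order — do not suffice to synthesize an arbitrary single-qubit unitary; at least three components are required.) -/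
/-!
A quadratic relation between the entries separates `H` from both families. In a scalar multiple of
`B(θ) Z(φ)` the product of the entries of the first row equals that of the second row (the phases
`e^{iφ}` and `e^{-iφ}` cancel), and in a scalar multiple of `Z(φ) B(θ)` the same holds for the
columns. For `H` these products are `1/2` and `-1/2`.
-/

open Matrix Complex

/-- two components do not suffice: the Hadamard matrix is not of
the form `e^{iδ}·B(θ)·Z(φ)` nor `e^{iδ}·Z(φ)·B(θ)`. -/
theorem hadamard_needs_three_components (δ θ φ : ℝ) :
    Hmat ≠ Complex.exp (Complex.I * (δ : ℂ)) • (Bmat θ * Zmat φ) ∧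
    Hmat ≠ Complex.exp (Complex.I * (δ : ℂ)) • (Zmat φ * Bmat θ) := by
  have h2 : ((1 / Real.sqrt 2 : ℝ) : ℂ) ≠ 0 := by
    rw [Complex.ofReal_ne_zero]; positivity
  constructor
  · intro h
    -- the two rows of `B Z` have the same product of entries
    have key : Hmat 0 0 * Hmat 0 1 = Hmat 1 0 * Hmat 1 1 := by
      rw [h]
      simp [Bmat, Zmat]
      ring
    simp only [Hmat, Matrix.smul_apply, smul_eq_mul, Matrix.of_apply, Matrix.cons_val] at key
    exact h2 (pow_eq_zero_iff two_ne_zero |>.mp (by linear_combination key / 2))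
  · intro h
    -- the two columns of `Z B` have the same product of entries
    have key : Hmat 0 0 * Hmat 1 0 = Hmat 0 1 * Hmat 1 1 := by
      rw [h]
      simp [Bmat, Zmat]
      ring
    simp only [Hmat, Matrix.smul_apply, smul_eq_mul, Matrix.of_apply, Matrix.cons_val] at key
    exact h2 (pow_eq_zero_iff two_ne_zero |>.mp (by linear_combination key / 2))
end
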